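/- arXiv:2311.00185 — 3 statements merged into one kernel-verified Lean document; each statement's English description precedes it below -/
import Mathlib

section
/- Let n ≥ 2 and t ∈ {1,…,n−1}. Let P ⊆ [0,1]^n be a convex set, let c ∈ ℝ^n with c ≠ 0, and let δ ∈ ℝ. For J ⊆ {1,…,n} write P^J := P ∩ {x : x_j = 0 for all j ∈ J}. Assume: (i) P_I contains n+1 affinely independent points; (ii) c·x ≥ δ for all x ∈ P_I, and {x ∈ P_I : c·x = δ} contains n affinely independent points; (iii) for every J with |J| = n−t, the set (P^J)_I contains t+1 affinely independent points and {x ∈ (P^J)_I : c·x = δ} contains t affinely independent points. Then for every J ⊆ {1,…,n} with |J| ≤ n−t, the set (P^J)_I contains n−|J|+1 affinely independent points and the set {x ∈ (P^J)_I : c·x = δ} contains n−|J| affinely independent points. -/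
open Set

def cube (n : ℕ) : Set (Fin n → ℝ) := {x | ∀ i, 0 ≤ x i ∧ x i ≤ 1}

def corners (n : ℕ) : Set (Fin n → ℝ) := {x | ∀ i, x i = 0 ∨ x i = 1}

def integerHull (n : ℕ) (P : Set (Fin n → ℝ)) : Set (Fin n → ℝ) :=
  convexHull ℝ (P ∩ corners n)

def dotp {n : ℕ} (a x : Fin n → ℝ) : ℝ := ∑ i, a i * x i

/-- `P^J` : the points of `P` with all coordinates in `J` fixed to zero. -/
def restr (n : ℕ) (P : Set (Fin n → ℝ)) (J : Finset (Fin n)) : Set (Fin n → ℝ) :=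
  P ∩ {x | ∀ j ∈ J, x j = 0}

/-!
In the nonnegative orthant, cutting by `x_j = 0` commutes with taking convex hulls and with cutting
by `c·x = δ`, so it suffices to study the coordinate faces `X^J` of the single set `X = P_I`.

If `dim X^K ≥ 1`, some `j ∉ K` is not constant on `X^K`, and then `dim X^(K ∪ {j}) < dim X^K`. So a
lower bound on `dim X^J` for all `J` of one size improves by one each time the size drops by one, as
long as it starts at one or more. This settles both claims, except the one on tight points
when `t = 1`, where (iii) only gives a point. There, if the tight face of `X^K` with `|K| = n - 2`
were a single point, that point would be `0`, so `δ = 0`; since `X` meets every positive coordinate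
half-axis by (iii), `c ≥ 0`, and `c` is positive off `K`. Hence all tight points vanish on the two
coordinates off `K`, and they cannot span a facet.
-/

open Module

section ContainsAffineIndep

variable (k : Type*) {V : Type*} [DivisionRing k] [AddCommGroup V] [Module k V]

/-- The set `S` contains `m` affinely independent points, i.e. it is nonempty of affine dimension at
least `m - 1` when `m` is positive. -/
def ContainsAffineIndep (m : ℕ) (S : Set V) : Prop :=
  ∃ s : Fin m → V, AffineIndependent k s ∧ ∀ i, s i ∈ S

variable {k} {m : ℕ} {S : Set V}

lemma ContainsAffineIndep.nonempty (h : ContainsAffineIndep k m S) (hm : 0 < m) : S.Nonempty :=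
  let ⟨s, _, hmem⟩ := h
  ⟨s ⟨0, hm⟩, hmem _⟩

lemma containsAffineIndep_two_iff : ContainsAffineIndep k 2 S ↔ S.Nontrivial := by
  constructor
  · rintro ⟨s, hs, hmem⟩
    exact ⟨s 0, hmem 0, s 1, hmem 1, hs.injective.ne zero_ne_one⟩
  · rintro ⟨p, hp, q, hq, hpq⟩
    exact ⟨![p, q], affineIndependent_of_ne k hpq, Fin.forall_fin_two.2 ⟨hp, hq⟩⟩

lemma ContainsAffineIndep.le_finrank_vectorSpan_add_one [FiniteDimensional k V]
    (h : ContainsAffineIndep k m S) : m ≤ finrank k (vectorSpan k S) + 1 := by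
  obtain ⟨s, hs, hmem⟩ := h
  have hspan : vectorSpan k (range s) ≤ vectorSpan k S :=
    vectorSpan_mono k (range_subset_iff.2 hmem)
  calc m = Fintype.card (Fin m) := (Fintype.card_fin m).symm
    _ ≤ finrank k (vectorSpan k (range s)) + 1 := hs.card_le_finrank_succ
    _ ≤ finrank k (vectorSpan k S) + 1 := by gcongr; exact Submodule.finrank_mono hspan

lemma containsAffineIndep_of_le_finrank_vectorSpan_add_one [FiniteDimensional k V]
    (hS : S.Nonempty) (hm : m ≤ finrank k (vectorSpan k S) + 1) : ContainsAffineIndep k m S := by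
  obtain ⟨T, hTS, hspan, hT⟩ := exists_affineIndependent k V S
  have : Finite T := finite_of_fin_dim_affineIndependent k hT
  have : Fintype T := Fintype.ofFinite T
  have : Nonempty T := by
    rw [nonempty_coe_sort, ← affineSpan_nonempty k, hspan, affineSpan_nonempty]
    exact hS
  have hcard : Fintype.card T = finrank k (vectorSpan k S) + 1 := by
    rw [← hT.finrank_vectorSpan_add_one, Subtype.range_coe, ← direction_affineSpan, hspan,
      direction_affineSpan]
  obtain ⟨f⟩ : Nonempty (Fin m ↪ T) :=
    Function.Embedding.nonempty_of_card_le (by rwa [Fintype.card_fin, hcard])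
  exact ⟨fun i ↦ f i, hT.comp_embedding f, fun i ↦ hTS (f i).2⟩

end ContainsAffineIndep

section ZeroFace

/-- The points of `X` whose coordinates in `J` vanish, written `X^J` in the informal statement; this
is `restr` over an arbitrary index type. When `X` lies in the nonnegative orthant it is a
face of `X`. -/
def zeroFace {ι 𝕜 : Type*} [Zero 𝕜] (X : Set (ι → 𝕜)) (J : Finset ι) : Set (ι → 𝕜) :=
  X ∩ {x | ∀ j ∈ J, x j = 0}

variable {ι 𝕜 : Type*}

lemma zeroFace_anti [Zero 𝕜] (X : Set (ι → 𝕜)) : Antitone (zeroFace X) :=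
  fun _ _ hJK _ hx ↦ ⟨hx.1, fun j hj ↦ hx.2 j (hJK hj)⟩

lemma zeroFace_inter [Zero 𝕜] (X Y : Set (ι → 𝕜)) (J : Finset ι) :
    zeroFace (X ∩ Y) J = zeroFace X J ∩ Y :=
  inter_right_comm ..

section Dimension

variable [Field 𝕜] {X : Set (ι → 𝕜)} {J K : Finset ι} {m : ℕ}

lemma apply_eq_zero_of_mem_vectorSpan_zeroFace {v : ι → 𝕜}
    (hv : v ∈ vectorSpan 𝕜 (zeroFace X J)) {j : ι} (hj : j ∈ J) : v j = 0 := by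
  have hker : vectorSpan 𝕜 (zeroFace X J) ≤ LinearMap.ker (LinearMap.proj (R := 𝕜) j) := by
    rw [vectorSpan_def, Submodule.span_le]
    rintro _ ⟨x, hx, y, hy, rfl⟩
    simp [hx.2 j hj, hy.2 j hj]
  exact hker hv

lemma finrank_vectorSpan_zeroFace_insert_lt [Finite ι] [DecidableEq ι] {v : ι → 𝕜}
    (hv : v ∈ vectorSpan 𝕜 (zeroFace X K)) {j : ι} (hvj : v j ≠ 0) :
    finrank 𝕜 (vectorSpan 𝕜 (zeroFace X (insert j K))) <
      finrank 𝕜 (vectorSpan 𝕜 (zeroFace X K)) := by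
  refine Submodule.finrank_lt_finrank_of_lt <|
    (vectorSpan_mono 𝕜 (zeroFace_anti X (K.subset_insert j))).lt_of_not_ge fun hle ↦ hvj ?_
  exact apply_eq_zero_of_mem_vectorSpan_zeroFace (hle hv) (K.mem_insert_self j)

lemma finrank_vectorSpan_zeroFace_add_card_le [Fintype ι] :
    finrank 𝕜 (vectorSpan 𝕜 (zeroFace X J)) + J.card ≤ Fintype.card ι := by
  let restrict : (ι → 𝕜) →ₗ[𝕜] (J → 𝕜) := LinearMap.funLeft 𝕜 𝕜 Subtype.val
  have hsurj : Function.Surjective restrict :=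
    LinearMap.funLeft_surjective_of_injective 𝕜 𝕜 _ Subtype.val_injective
  have hker : vectorSpan 𝕜 (zeroFace X J) ≤ LinearMap.ker restrict := fun v hv ↦
    funext fun j ↦ apply_eq_zero_of_mem_vectorSpan_zeroFace hv j.2
  calc finrank 𝕜 (vectorSpan 𝕜 (zeroFace X J)) + J.card
      ≤ finrank 𝕜 (LinearMap.ker restrict) + finrank 𝕜 (LinearMap.range restrict) := by
        rw [LinearMap.range_eq_top.2 hsurj, finrank_top, finrank_fintype_fun_eq_card,
          Fintype.card_coe]
        gcongr
        exact Submodule.finrank_mono hker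
    _ = Fintype.card ι := by
        rw [add_comm, restrict.finrank_range_add_finrank_ker, finrank_fintype_fun_eq_card]

lemma ContainsAffineIndep.zeroFace_of_insert [Finite ι] [DecidableEq ι] (hm : 2 ≤ m)
    (hK : ∃ j, j ∉ K) (h : ∀ j ∉ K, ContainsAffineIndep 𝕜 m (zeroFace X (insert j K))) :
    ContainsAffineIndep 𝕜 (m + 1) (zeroFace X K) := by
  obtain ⟨i, hi⟩ := hK
  have hsub : zeroFace X (insert i K) ⊆ zeroFace X K := zeroFace_anti X (K.subset_insert i)
  obtain ⟨v, hv, hv0⟩ : ∃ v ∈ vectorSpan 𝕜 (zeroFace X K), v ≠ 0 := by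
    have hpos : 0 < finrank 𝕜 (vectorSpan 𝕜 (zeroFace X (insert i K))) := by
      have := (h i hi).le_finrank_vectorSpan_add_one
      omega
    obtain ⟨v, hv, hv0⟩ := (Submodule.ne_bot_iff _).1 (Submodule.one_le_finrank_iff.1 hpos)
    exact ⟨v, vectorSpan_mono 𝕜 hsub hv, hv0⟩
  obtain ⟨j, hvj⟩ := Function.ne_iff.1 hv0
  have hj : j ∉ K := fun hjK ↦ hvj (apply_eq_zero_of_mem_vectorSpan_zeroFace hv hjK)
  refine containsAffineIndep_of_le_finrank_vectorSpan_add_one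
    (((h i hi).nonempty (by omega)).mono hsub) ?_
  have hdrop := finrank_vectorSpan_zeroFace_insert_lt hv hvj
  have hdim := (h j hj).le_finrank_vectorSpan_add_one
  omega

lemma ContainsAffineIndep.zeroFace_of_card_add [Fintype ι] {a : ℕ} (hm : 2 ≤ m)
    (ha : a ≤ Fintype.card ι)
    (h : ∀ J : Finset ι, J.card = a → ContainsAffineIndep 𝕜 m (zeroFace X J)) {k : ℕ}
    (hK : K.card + k = a) : ContainsAffineIndep 𝕜 (m + k) (zeroFace X K) := by
  classical
  induction k generalizing K with
  | zero => exact h K hK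
  | succ k ih =>
    have hKne : ∃ j, j ∉ K := by
      obtain ⟨j, -, hj⟩ := Finset.exists_mem_notMem_of_card_lt_card (s := K) (t := Finset.univ)
        (by rw [Finset.card_univ]; omega)
      exact ⟨j, hj⟩
    refine zeroFace_of_insert (Nat.le_add_right_of_le hm) hKne fun j hj ↦ ih ?_
    rw [Finset.card_insert_of_notMem hj]
    omega

end Dimension

lemma zeroFace_subset_singleton_zero [Zero 𝕜] [DecidableEq ι] {X : Set (ι → 𝕜)} {K : Finset ι}
    (hsub : (zeroFace X K).Subsingleton) (hne : ∀ j ∉ K, (zeroFace X (insert j K)).Nonempty) :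
    zeroFace X K ⊆ {0} := by
  intro p hp
  funext j
  by_cases hj : j ∈ K
  · exact hp.2 j hj
  · obtain ⟨q, hq⟩ := hne j hj
    rw [hsub hp (zeroFace_anti X (K.subset_insert j) hq)]
    exact hq.2 j (K.mem_insert_self j)

lemma exists_single_mem_of_nontrivial_zeroFace [Zero 𝕜] [Fintype ι] [DecidableEq ι]
    {X : Set (ι → 𝕜)} {i : ι} (h : (zeroFace X {i}ᶜ).Nontrivial) :
    ∃ a ≠ 0, Pi.single i a ∈ X := by
  obtain ⟨p, hp, hp0⟩ := h.exists_ne 0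
  have hsingle : Pi.single i (p i) = p := by
    funext j
    rcases eq_or_ne j i with rfl | hji
    · exact Pi.single_eq_same ..
    · rw [Pi.single_eq_of_ne hji, hp.2 j (by simpa using hji)]
  refine ⟨p i, fun hpi ↦ hp0 ?_, by rw [hsingle]; exact hp.1⟩
  rw [← hsingle, hpi, Pi.single_zero]

end ZeroFace

section ConvexHull

variable {ι 𝕜 : Type*} [Field 𝕜] [LinearOrder 𝕜]

lemma convex_zeroFace {X : Set (ι → 𝕜)} (hX : Convex 𝕜 X) (J : Finset ι) :
    Convex 𝕜 (zeroFace X J) := by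
  refine hX.inter fun x hx y hy a b _ _ _ j hj ↦ ?_
  simp [hx j hj, hy j hj]

variable [IsStrictOrderedRing 𝕜]

lemma convexHull_inter_of_isExtreme {E : Type*} [AddCommGroup E] [Module 𝕜 E] {A C F : Set E}
    (hAC : A ⊆ C) (hC : Convex 𝕜 C) (hF : Convex 𝕜 F) (hCF : IsExtreme 𝕜 C F) :
    convexHull 𝕜 (A ∩ F) = convexHull 𝕜 A ∩ F := by
  refine (convexHull_min (inter_subset_inter_left F (subset_convexHull 𝕜 A))
    ((convex_convexHull 𝕜 A).inter hF)).antisymm ?_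
  suffices hconv : Convex 𝕜 {x ∈ C | x ∈ F → x ∈ convexHull 𝕜 (A ∩ F)} from fun x hx ↦
    (hconv.convexHull_subset_iff.2
      (fun y hy ↦ ⟨hAC hy, fun hyF ↦ subset_convexHull 𝕜 _ ⟨hy, hyF⟩⟩) hx.1).2 hx.2
  rw [convex_iff_openSegment_subset]
  rintro x ⟨hxC, hx⟩ y ⟨hyC, hy⟩ z hz
  refine ⟨hC.openSegment_subset hxC hyC hz, fun hzF ↦ ?_⟩
  exact (convex_convexHull 𝕜 _).openSegment_subset
    (hx (hCF.left_mem_of_mem_openSegment hxC hyC hzF hz))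
    (hy (hCF.right_mem_of_mem_openSegment hxC hyC hzF hz)) hz

lemma isExtreme_zeroFace_Ici (J : Finset ι) :
    IsExtreme 𝕜 (Ici (0 : ι → 𝕜)) (zeroFace (Ici 0) J) := by
  refine ⟨inter_subset_left, fun x hx y hy z hz hzxy ↦ ⟨hx, fun j hj ↦ ?_⟩⟩
  obtain ⟨a, b, ha, hb, -, rfl⟩ := hzxy
  have hsum : a * x j + b * y j = 0 := hz.2 j hj
  have hax : a * x j = 0 := ((add_eq_zero_iff_of_nonneg (mul_nonneg ha.le (hx j))
    (mul_nonneg hb.le (hy j))).1 hsum).1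
  exact (mul_eq_zero.1 hax).resolve_left ha.ne'

lemma convexHull_zeroFace {A : Set (ι → 𝕜)} (hA : A ⊆ Ici 0) (J : Finset ι) :
    convexHull 𝕜 (zeroFace A J) = zeroFace (convexHull 𝕜 A) J := by
  have hhull : convexHull 𝕜 A ⊆ Ici 0 := convexHull_min hA (convex_Ici 0)
  have hface {B : Set (ι → 𝕜)} (hB : B ⊆ Ici 0) : zeroFace B J = B ∩ zeroFace (Ici 0) J := by
    rw [inter_comm, ← zeroFace_inter, inter_eq_right.2 hB]
  rw [hface hA, hface hhull, convexHull_inter_of_isExtreme hA (convex_Ici 0)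
    (convex_zeroFace (convex_Ici 0) J) (isExtreme_zeroFace_Ici J)]

end ConvexHull

section TightPoints

variable {ι 𝕜 : Type*} [Fintype ι] [Field 𝕜] [LinearOrder 𝕜] [IsStrictOrderedRing 𝕜]
  {X : Set (ι → 𝕜)} {c : ι → 𝕜} {δ : 𝕜}

lemma nonneg_of_single_mem [DecidableEq ι] (hX : X ⊆ Ici 0) (hvalid : ∀ x ∈ X, 0 ≤ c ⬝ᵥ x)
    {i : ι} {a : 𝕜} (ha : a ≠ 0) (hmem : Pi.single i a ∈ X) : 0 ≤ c i := by
  have hpos : 0 < a := (Pi.single_nonneg.1 (hX hmem)).lt_of_ne' ha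
  have hprod : 0 ≤ c i * a := by simpa only [dotProduct_single] using hvalid _ hmem
  exact nonneg_of_mul_nonneg_left hprod hpos

lemma apply_eq_zero_of_dotProduct_eq_zero {x : ι → 𝕜} (hc : 0 ≤ c) (hx : 0 ≤ x)
    (hcx : c ⬝ᵥ x = 0) {i : ι} (hi : c i ≠ 0) : x i = 0 := by
  have hterm : c i * x i = 0 := (Finset.sum_eq_zero_iff_of_nonneg
    fun j _ ↦ mul_nonneg (hc j) (hx j)).1 hcx i (Finset.mem_univ i)
  exact (mul_eq_zero.1 hterm).resolve_left hi

lemma nontrivial_zeroFace_tight [DecidableEq ι] (hX : X ⊆ Ici 0) (hvalid : ∀ x ∈ X, δ ≤ c ⬝ᵥ x)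
    (haxis : ∀ i, ∃ a ≠ 0, Pi.single i a ∈ X)
    (hfacet : ContainsAffineIndep 𝕜 (Fintype.card ι) {x ∈ X | c ⬝ᵥ x = δ})
    {K : Finset ι} (hK : K.card + 2 ≤ Fintype.card ι)
    (hne : ∀ j ∉ K, (zeroFace {x ∈ X | c ⬝ᵥ x = δ} (insert j K)).Nonempty) :
    (zeroFace {x ∈ X | c ⬝ᵥ x = δ} K).Nontrivial := by
  set T := {x ∈ X | c ⬝ᵥ x = δ}
  by_contra htriv
  have hzero : zeroFace T K ⊆ {0} := zeroFace_subset_singleton_zero (not_nontrivial_iff.1 htriv) hne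
  obtain rfl : δ = 0 := by
    obtain ⟨j, -, hj⟩ := Finset.exists_mem_notMem_of_card_lt_card (s := K) (t := Finset.univ)
      (by rw [Finset.card_univ]; omega)
    obtain ⟨p, hp⟩ := (hne j hj).mono (zeroFace_anti T (K.subset_insert j))
    rw [← hp.1.2, mem_singleton_iff.1 (hzero hp), dotProduct_zero]
  choose a ha hmem using haxis
  have hc : 0 ≤ c := fun i ↦ nonneg_of_single_mem hX hvalid (ha i) (hmem i)
  have hc_ne : ∀ i ∉ K, c i ≠ 0 := by
    intro i hi hci
    have hface : Pi.single i (a i) ∈ zeroFace T K :=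
      ⟨⟨hmem i, by rw [dotProduct_single, hci, zero_mul]⟩,
        fun j hj ↦ Pi.single_eq_of_ne (ne_of_mem_of_not_mem hj hi) _⟩
    exact ha i (Pi.single_eq_zero_iff.1 (hzero hface))
  have hT : zeroFace T Kᶜ = T := inter_eq_left.2 fun x hx i hi ↦
    apply_eq_zero_of_dotProduct_eq_zero hc (hX hx.1) hx.2 (hc_ne i (Finset.mem_compl.1 hi))
  have hdim := finrank_vectorSpan_zeroFace_add_card_le (X := T) (J := Kᶜ)
  rw [hT, Finset.card_compl] at hdim
  have := hfacet.le_finrank_vectorSpan_add_one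
  omega

theorem stmt4_general {n t : ℕ} (hn : Fintype.card ι = n) (ht1 : 1 ≤ t) (htn : t ≤ n)
    (hX : X ⊆ Ici 0) (hvalid : ∀ x ∈ X, δ ≤ c ⬝ᵥ x)
    (hfacet : ContainsAffineIndep 𝕜 n {x ∈ X | c ⬝ᵥ x = δ})
    (hJ : ∀ J : Finset ι, J.card = n - t → ContainsAffineIndep 𝕜 (t + 1) (zeroFace X J) ∧
      ContainsAffineIndep 𝕜 t {x ∈ zeroFace X J | c ⬝ᵥ x = δ}) :
    ∀ J : Finset ι, J.card ≤ n - t → ContainsAffineIndep 𝕜 (n - J.card + 1) (zeroFace X J) ∧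
      ContainsAffineIndep 𝕜 (n - J.card) {x ∈ zeroFace X J | c ⬝ᵥ x = δ} := by
  classical
  subst hn
  have htight (J : Finset ι) :
      {x ∈ zeroFace X J | c ⬝ᵥ x = δ} = zeroFace {x ∈ X | c ⬝ᵥ x = δ} J :=
    (zeroFace_inter X _ J).symm
  simp only [htight] at hJ ⊢
  intro J hcard
  obtain ⟨k, hk⟩ := Nat.exists_eq_add_of_le hcard
  rw [show Fintype.card ι - J.card = t + k by omega]
  refine ⟨add_right_comm t k 1 ▸ ContainsAffineIndep.zeroFace_of_card_add (by omega)
    (Nat.sub_le _ t) (fun J hJt ↦ (hJ J hJt).1) hk.symm, ?_⟩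
  rcases ht1.eq_or_lt with rfl | ht
  · rcases k with _ | k
    · exact (hJ J hk.symm).2
    have haxis (i : ι) : ∃ a ≠ 0, Pi.single i a ∈ X :=
      exists_single_mem_of_nontrivial_zeroFace <| containsAffineIndep_two_iff.1
        (hJ {i}ᶜ (by rw [Finset.card_compl, Finset.card_singleton])).1
    have hedge (K : Finset ι) (hK : K.card = Fintype.card ι - 2) :
        ContainsAffineIndep 𝕜 2 (zeroFace {x ∈ X | c ⬝ᵥ x = δ} K) :=
      containsAffineIndep_two_iff.2 <| nontrivial_zeroFace_tight hX hvalid haxis hfacet (by omega)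
        fun j hj ↦ (hJ _ (by rw [Finset.card_insert_of_notMem hj]; omega)).2.nonempty one_pos
    rw [show 1 + (k + 1) = 2 + k by omega]
    exact .zeroFace_of_card_add le_rfl (Nat.sub_le _ 2) hedge (by omega)
  · exact .zeroFace_of_card_add ht (Nat.sub_le _ t) (fun J hJt ↦ (hJ J hJt).2) hk.symm

end TightPoints

section IntegerHull

variable {n : ℕ} (P : Set (Fin n → ℝ))

lemma inter_corners_subset_Ici : P ∩ corners n ⊆ Ici 0 := by
  rintro x ⟨-, hx⟩ i
  rcases hx i with h | h <;> simp [h]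

lemma integerHull_subset_Ici : integerHull n P ⊆ Ici 0 :=
  convexHull_min (inter_corners_subset_Ici P) (convex_Ici 0)

lemma integerHull_restr (J : Finset (Fin n)) :
    integerHull n (restr n P J) = zeroFace (integerHull n P) J :=
  (congrArg (convexHull ℝ) (zeroFace_inter P (corners n) J).symm).trans
    (convexHull_zeroFace (inter_corners_subset_Ici P) J)

end IntegerHull

theorem stmt4 (n t : ℕ) (hn : 2 ≤ n) (ht1 : 1 ≤ t) (htn : t ≤ n - 1)
    (P : Set (Fin n → ℝ)) (hPcube : P ⊆ cube n) (hPconv : Convex ℝ P)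
    (c : Fin n → ℝ) (hc : c ≠ 0) (δ : ℝ)
    -- (i) `P_I` is full-dimensional
    (hfull : ∃ s : Fin (n + 1) → (Fin n → ℝ),
      AffineIndependent ℝ s ∧ ∀ i, s i ∈ integerHull n P)
    -- (ii) `c·x ≥ δ` is a facet of `P_I`
    (hvalid : ∀ x ∈ integerHull n P, δ ≤ dotp c x)
    (hfacet : ∃ s : Fin n → (Fin n → ℝ),
      AffineIndependent ℝ s ∧ ∀ i, s i ∈ integerHull n P ∧ dotp c (s i) = δ)
    -- (iii) conditions on each `P^J` with `|J| = n - t`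
    (hJ : ∀ J : Finset (Fin n), J.card = n - t →
      (∃ s : Fin (t + 1) → (Fin n → ℝ),
        AffineIndependent ℝ s ∧ ∀ i, s i ∈ integerHull n (restr n P J)) ∧
      (∃ s : Fin t → (Fin n → ℝ),
        AffineIndependent ℝ s ∧ ∀ i, s i ∈ integerHull n (restr n P J) ∧ dotp c (s i) = δ)) :
    ∀ J : Finset (Fin n), J.card ≤ n - t →
      (∃ s : Fin (n - J.card + 1) → (Fin n → ℝ),
        AffineIndependent ℝ s ∧ ∀ i, s i ∈ integerHull n (restr n P J)) ∧
      (∃ s : Fin (n - J.card) → (Fin n → ℝ),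
        AffineIndependent ℝ s ∧ ∀ i, s i ∈ integerHull n (restr n P J) ∧ dotp c (s i) = δ) := by
  simp only [integerHull_restr] at hJ ⊢
  exact stmt4_general (Fintype.card_fin n) ht1 (by omega) (integerHull_subset_Ici P) hvalid
    hfacet hJ
end

section
/- Let n ≥ 1, let P ⊆ [0,1]^n be a convex set, and let k ≥ 0. Then L^{k+1}(P) = ⋂_{j=1}^{n} conv( L^k(P ∩ {x : x_j = 0}) ∪ L^k(P ∩ {x : x_j = 1}) ). -/
open Set

def Lop (n : ℕ) (P : Set (Fin n → ℝ)) : Set (Fin n → ℝ) :=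
  ⋂ i : Fin n, convexHull ℝ ((P ∩ {x | x i = 0}) ∪ (P ∩ {x | x i = 1}))

def Lk (n : ℕ) : ℕ → Set (Fin n → ℝ) → Set (Fin n → ℝ)
  | 0, P => P
  | k + 1, P => Lop n (Lk n k P)

/-!
`L` commutes with taking faces. If `F` is a convex extreme subset of a convex set `A`, a point of `F`
is a proper convex combination only of points of `A` that already lie in `F`, so for subsets of `A`
the convex hull commutes with intersecting with `F`; by induction `L^k(P) ∩ F = L^k(P ∩ F)` for
`P ⊆ A`. The theorem is the case of the facets `x_j = 0` and `x_j = 1` of the cube.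
-/

section ExtremeSets

variable {𝕜 E G : Type*}

theorem convexHull_inter_of_isExtreme_s5 [Semiring 𝕜] [PartialOrder 𝕜] [ZeroLEOneClass 𝕜]
    [AddCommMonoid E] [Module 𝕜 E] {A F S : Set E} (hA : Convex 𝕜 A) (hAF : IsExtreme 𝕜 A F)
    (hF : Convex 𝕜 F) (hSA : S ⊆ A) : convexHull 𝕜 S ∩ F = convexHull 𝕜 (S ∩ F) := by
  apply Subset.antisymm
  · have hconv : Convex 𝕜 {x ∈ A | x ∈ F → x ∈ convexHull 𝕜 (S ∩ F)} := by
      refine convex_iff_openSegment_subset.2 fun x hx y hy z hz ↦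
        ⟨hA.openSegment_subset hx.1 hy.1 hz, fun hzF ↦ ?_⟩
      have hxF : x ∈ F := hAF.left_mem_of_mem_openSegment hx.1 hy.1 hzF hz
      have hyF : y ∈ F := hAF.right_mem_of_mem_openSegment hx.1 hy.1 hzF hz
      exact (convex_convexHull 𝕜 _).openSegment_subset (hx.2 hxF) (hy.2 hyF) hz
    have hsub : S ⊆ {x ∈ A | x ∈ F → x ∈ convexHull 𝕜 (S ∩ F)} := fun x hx ↦
      ⟨hSA hx, fun hxF ↦ subset_convexHull 𝕜 _ ⟨hx, hxF⟩⟩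
    exact fun x hx ↦ (convexHull_min hsub hconv hx.1).2 hx.2
  · exact subset_inter (convexHull_mono inter_subset_left) (convexHull_min inter_subset_right hF)

theorem isExtreme_inter_preimage [Ring 𝕜] [PartialOrder 𝕜] [AddRightMono 𝕜]
    [AddCommGroup E] [AddCommGroup G] [Module 𝕜 E] [Module 𝕜 G]
    {A : Set E} {B C : Set G} (f : E →ᵃ[𝕜] G) (hf : MapsTo f A B)
    (hBC : IsExtreme 𝕜 B C) : IsExtreme 𝕜 A (A ∩ f ⁻¹' C) := by
  refine ⟨inter_subset_left, fun x hx y hy z hz hzxy ↦ ⟨hx, ?_⟩⟩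
  have hfz : f z ∈ openSegment 𝕜 (f x) (f y) :=
    image_openSegment 𝕜 f x y ▸ mem_image_of_mem f hzxy
  exact hBC.left_mem_of_mem_openSegment (hf hx) (hf hy) hz.2 hfz

end ExtremeSets

section Cube

variable {n : ℕ}

theorem cube_eq_Icc : cube n = Icc 0 1 := by
  ext x
  simp [cube, Pi.le_def, forall_and]

theorem convex_cube : Convex ℝ (cube n) :=
  cube_eq_Icc ▸ convex_Icc 0 1

theorem isExtreme_cube_facet (j : Fin n) {c : ℝ} (hc : c ∈ ({0, 1} : Set ℝ)) :
    IsExtreme ℝ (cube n) (cube n ∩ {x | x j = c}) := by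
  have hpoint : IsExtreme ℝ (Icc (0 : ℝ) 1) {c} := by
    rwa [isExtreme_singleton, extremePoints_Icc zero_le_one]
  have hmaps : MapsTo (AffineMap.proj j : (Fin n → ℝ) →ᵃ[ℝ] ℝ) (cube n) (Icc 0 1) :=
    fun _ hx ↦ hx j
  exact isExtreme_inter_preimage _ hmaps hpoint

theorem convex_cube_slice (j : Fin n) (c : ℝ) : Convex ℝ (cube n ∩ {x | x j = c}) :=
  convex_cube.inter <|
    (convex_singleton c).affine_preimage (AffineMap.proj j : (Fin n → ℝ) →ᵃ[ℝ] ℝ)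

end Cube

section LiftAndProject

variable {n : ℕ} {A F P : Set (Fin n → ℝ)}

theorem Lop_subset [Nonempty (Fin n)] (hA : Convex ℝ A) (hPA : P ⊆ A) : Lop n P ⊆ A := by
  refine (iInter_subset _ (Classical.arbitrary (Fin n))).trans (convexHull_min ?_ hA)
  rw [← inter_union_distrib_left]
  exact inter_subset_left.trans hPA

theorem Lk_subset [Nonempty (Fin n)] (hA : Convex ℝ A) (hPA : P ⊆ A) (k : ℕ) : Lk n k P ⊆ A := by
  induction k with
  | zero => exact hPA
  | succ k ih => exact Lop_subset hA ih

theorem Lop_inter_of_isExtreme [Nonempty (Fin n)] (hA : Convex ℝ A) (hAF : IsExtreme ℝ A F)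
    (hF : Convex ℝ F) (hPA : P ⊆ A) : Lop n P ∩ F = Lop n (P ∩ F) := by
  rw [Lop, Lop, iInter_inter]
  refine iInter_congr fun i ↦ ?_
  simp only [← inter_union_distrib_left]
  rw [convexHull_inter_of_isExtreme_s5 hA hAF hF (inter_subset_left.trans hPA), inter_right_comm]

theorem Lk_inter_of_isExtreme [Nonempty (Fin n)] (hA : Convex ℝ A) (hAF : IsExtreme ℝ A F)
    (hF : Convex ℝ F) (hPA : P ⊆ A) (k : ℕ) : Lk n k P ∩ F = Lk n k (P ∩ F) := by
  induction k with
  | zero => rfl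
  | succ k ih => rw [Lk, Lk, Lop_inter_of_isExtreme hA hAF hF (Lk_subset hA hPA k), ih]

theorem Lk_inter_facet (hP : P ⊆ cube n) (j : Fin n) {c : ℝ} (hc : c ∈ ({0, 1} : Set ℝ)) (k : ℕ) :
    Lk n k P ∩ {x | x j = c} = Lk n k (P ∩ {x | x j = c}) := by
  have : Nonempty (Fin n) := ⟨j⟩
  have h := Lk_inter_of_isExtreme convex_cube (isExtreme_cube_facet j hc)
    (convex_cube_slice j c) hP k
  rwa [← inter_assoc, ← inter_assoc, inter_eq_left.2 hP,
    inter_eq_left.2 (Lk_subset convex_cube hP k)] at h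

end LiftAndProject

theorem stmt5_general (n : ℕ) (P : Set (Fin n → ℝ)) (hPcube : P ⊆ cube n) (k : ℕ) :
    Lk n (k + 1) P =
      ⋂ j : Fin n, convexHull ℝ
        (Lk n k (P ∩ {x | x j = 0}) ∪ Lk n k (P ∩ {x | x j = 1})) := by
  rw [Lk, Lop]
  refine iInter_congr fun j ↦ ?_
  rw [Lk_inter_facet hPcube j (by simp), Lk_inter_facet hPcube j (by simp)]

theorem stmt5 (n : ℕ) (hn : 1 ≤ n) (P : Set (Fin n → ℝ)) (hPcube : P ⊆ cube n)
    (hPconv : Convex ℝ P) (k : ℕ) :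
    Lk n (k + 1) P =
      ⋂ j : Fin n, convexHull ℝ
        (Lk n k (P ∩ {x | x j = 0}) ∪ Lk n k (P ∩ {x | x j = 1})) :=
  stmt5_general n P hPcube k
end

section
/- Let m ≥ 1 and n := 3m + 1. Let P := conv( {(y,0) : y ∈ {0,1}^{3m}} ∪ {(y,1) : y ∈ Q_m} ) ⊆ [0,1]^n, where the last coordinate is x_n. Then L^2(P) = P_I = [0,1]^{3m} × {0}. -/
open Set

/-- The `a`-th vertex of the `i`-th triangle, as an index in `Fin (3 * m)`. -/
def tidx (m : ℕ) (i : Fin m) (a : Fin 3) : Fin (3 * m) :=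
  ⟨3 * i.val + a.val, by have := i.isLt; have := a.isLt; omega⟩

/-- `Q_m`: the fractional stable set polytope of `m` disjoint triangles, intersected with the
half-space `∑ y_v ≥ m + 1/2`. -/
def Qm (m : ℕ) : Set (Fin (3 * m) → ℝ) :=
  {y | (∀ v, 0 ≤ y v ∧ y v ≤ 1) ∧
       (∀ i : Fin m,
          y (tidx m i 0) + y (tidx m i 1) ≤ 1 ∧
          y (tidx m i 0) + y (tidx m i 2) ≤ 1 ∧
          y (tidx m i 1) + y (tidx m i 2) ≤ 1) ∧
       (m : ℝ) + 1 / 2 ≤ ∑ v, y v}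

/-!
Where `x_n ≤ 1` is valid, taking the face `x_n = 1` commutes with convex hulls, so a point of `L(P)`
on that face lies in `L` of the face. The face `x_n = 1` of `P` is a copy of `Q_m`, and
`L(Q_m) = ∅`: branching on one vertex of a triangle turns its three edge inequalities into
`y_u + y_v + y_w ≤ 1`, so `∑ y_v ≤ m` on `L(Q_m)`, against `∑ y_v ≥ m + 1/2`. Hence `L(P)` misses
the face `x_n = 1`, and branching on `x_n` in the second round leaves only the face `x_n = 0` of
`P`, which is integral.
-/

theorem convexHull_inter_hyperplane_eq {𝕜 E : Type*} [Field 𝕜] [LinearOrder 𝕜]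
    [IsStrictOrderedRing 𝕜] [AddCommGroup E] [Module 𝕜 E] {s : Set E} (f : E →ₗ[𝕜] 𝕜) {c : 𝕜}
    (hs : ∀ x ∈ s, f x ≤ c) :
    convexHull 𝕜 s ∩ {x | f x = c} = convexHull 𝕜 (s ∩ {x | f x = c}) := by
  apply Subset.antisymm
  · rintro x ⟨hx, hfx⟩
    obtain ⟨ι, _, z, w, hz, -, hw, hw1, rfl⟩ := eq_pos_convex_span_of_mem_convexHull hx
    have hzs i : z i ∈ s := hz (mem_range_self i)
    have hslack : ∑ i, w i * (c - f (z i)) = 0 := by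
      simp only [mem_ofPred_eq, map_sum, map_smul, smul_eq_mul] at hfx
      simp only [mul_sub, Finset.sum_sub_distrib, ← Finset.sum_mul, hw1, hfx, one_mul, sub_self]
    have hface i : f (z i) = c := by
      have h := (Finset.sum_eq_zero_iff_of_nonneg fun j _ ↦
        mul_nonneg (hw j).le (sub_nonneg.2 (hs _ (hzs j)))).1 hslack i (Finset.mem_univ i)
      exact (sub_eq_zero.1 ((mul_eq_zero_iff_left (hw i).ne').1 h)).symm
    exact (convex_convexHull 𝕜 _).sum_mem (fun i _ ↦ (hw i).le) hw1
      fun i _ ↦ subset_convexHull 𝕜 _ ⟨hzs i, hface i⟩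
  · exact subset_inter (convexHull_mono inter_subset_left)
      (convexHull_min inter_subset_right (convex_hyperplane f.isLinear c))

theorem convexHull_corners (n : ℕ) : convexHull ℝ (corners n) = cube n := by
  have hcorners : corners n = univ.pi fun _ ↦ {0, 1} := by ext; simp [corners]
  have hcube : cube n = univ.pi fun _ ↦ Icc 0 1 := by
    ext; simp only [cube, mem_ofPred_eq, mem_univ_pi, mem_Icc]
  simp only [hcorners, hcube, convexHull_pi, convexHull_pair, segment_eq_Icc zero_le_one]

section LiftAndProject

variable {n : ℕ} {P C : Set (Fin n → ℝ)}

theorem convex_Lop : Convex ℝ (Lop n P) :=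
  convex_iInter fun _ ↦ convex_convexHull ℝ _

theorem Lop_mono (h : P ⊆ C) : Lop n P ⊆ Lop n C :=
  iInter_mono fun _ ↦ convexHull_mono
    (union_subset_union (inter_subset_inter_left _ h) (inter_subset_inter_left _ h))

theorem Lop_subset_of_convex (i : Fin n) (hC : Convex ℝ C)
    (h : ∀ x ∈ P, x i = 0 ∨ x i = 1 → x ∈ C) : Lop n P ⊆ C :=
  (iInter_subset _ i).trans <| convexHull_min
    (union_subset (fun x hx ↦ h x hx.1 (.inl hx.2)) fun x hx ↦ h x hx.1 (.inr hx.2)) hC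

theorem Lk_subset_of_convex [NeZero n] (hC : Convex ℝ C) (h : P ⊆ C) : ∀ k, Lk n k P ⊆ C
  | 0 => h
  | k + 1 => Lop_subset_of_convex 0 hC fun _ hx _ ↦ Lk_subset_of_convex hC h k hx

theorem inter_corners_subset_Lk : ∀ k, P ∩ corners n ⊆ Lk n k P
  | 0 => inter_subset_left
  | k + 1 => fun _ hx ↦ mem_iInter.2 fun i ↦ subset_convexHull ℝ _ <|
      (hx.2 i).imp (And.intro (inter_corners_subset_Lk k hx))
        (And.intro (inter_corners_subset_Lk k hx))

theorem integerHull_subset_Lk_succ (k : ℕ) : integerHull n P ⊆ Lk n (k + 1) P :=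
  convexHull_min (inter_corners_subset_Lk (k + 1)) convex_Lop

theorem Lop_inter_hyperplane_subset (f : (Fin n → ℝ) →ₗ[ℝ] ℝ) {c : ℝ}
    (hP : ∀ x ∈ P, f x ≤ c) : Lop n P ∩ {x | f x = c} ⊆ Lop n (P ∩ {x | f x = c}) := by
  rintro x ⟨hx, hfx⟩
  refine mem_iInter.2 fun i ↦ ?_
  have hface := (convexHull_inter_hyperplane_eq f (c := c) (by
    rintro y (hy | hy) <;> exact hP y hy.1)).subset ⟨mem_iInter.1 hx i, hfx⟩
  rwa [union_inter_distrib_right, inter_right_comm P {x | x i = 0},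
    inter_right_comm P {x | x i = 1}] at hface

theorem Lk_inter_hyperplane_subset [NeZero n] (f : (Fin n → ℝ) →ₗ[ℝ] ℝ) {c : ℝ}
    (hP : ∀ x ∈ P, f x ≤ c) : ∀ k, Lk n k P ∩ {x | f x = c} ⊆ Lk n k (P ∩ {x | f x = c})
  | 0 => subset_rfl
  | k + 1 => (Lop_inter_hyperplane_subset f
      (Lk_subset_of_convex (convex_halfSpace_le f.isLinear c) hP k)).trans
        (Lop_mono (Lk_inter_hyperplane_subset f hP k))

theorem Lk_succ_subset_inter_eq_zero (hP : Convex ℝ P) {j : Fin n} (hj : ∀ x ∈ P, x j ≤ 1)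
    {k : ℕ} (hk : Lk n k (P ∩ {x | x j = 1}) = ∅) : Lk n (k + 1) P ⊆ P ∩ {x | x j = 0} := by
  have : NeZero n := j.neZero
  let π : (Fin n → ℝ) →ₗ[ℝ] ℝ := LinearMap.proj j
  refine Lop_subset_of_convex j (hP.inter (convex_hyperplane π.isLinear 0)) ?_
  rintro x hx (hx0 | hx1)
  · exact ⟨Lk_subset_of_convex hP subset_rfl k hx, hx0⟩
  · exact (hk.subset (Lk_inter_hyperplane_subset π hj k ⟨hx, hx1⟩)).elim

theorem Lop_subset_triangle_le_one {u v w : Fin n}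
    (hP : ∀ x ∈ P, x u + x v ≤ 1 ∧ x u + x w ≤ 1 ∧ x v + x w ≤ 1) :
    Lop n P ⊆ {x | x u + x v + x w ≤ 1} := by
  let π (j : Fin n) : (Fin n → ℝ) →ₗ[ℝ] ℝ := LinearMap.proj j
  refine Lop_subset_of_convex u (convex_halfSpace_le (π u + π v + π w).isLinear 1) ?_
  intro x hx hu
  obtain ⟨huv, huw, hvw⟩ := hP x hx
  change x u + x v + x w ≤ 1
  rcases hu with hu | hu
  · linarith only [hu, hvw]
  · linarith only [hu, huv, huw]

end LiftAndProject

section Cayley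

variable {n : ℕ}

/-- The affine embedding `y ↦ (y, c)` of `ℝⁿ` onto the hyperplane of `ℝⁿ⁺¹` where the last
coordinate is `c`. -/
def snocAffine (c : ℝ) : (Fin n → ℝ) →ᵃ[ℝ] (Fin (n + 1) → ℝ) where
  toFun y := Fin.snoc y c
  linear :=
    { toFun y := Fin.snoc y 0
      map_add' y z := by ext i; cases i using Fin.lastCases <;> simp
      map_smul' a y := by ext i; cases i using Fin.lastCases <;> simp }
  map_vadd' y z := by ext i; cases i using Fin.lastCases <;> simp

@[simp]
theorem snocAffine_castSucc (c : ℝ) (y : Fin n → ℝ) (i : Fin n) :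
    snocAffine c y i.castSucc = y i :=
  Fin.snoc_castSucc (α := fun _ ↦ ℝ) c y i

@[simp]
theorem snocAffine_last (c : ℝ) (y : Fin n → ℝ) : snocAffine c y (Fin.last n) = c :=
  Fin.snoc_last (α := fun _ ↦ ℝ) c y

theorem snocAffine_injective (c : ℝ) : Function.Injective (snocAffine (n := n) c) :=
  Fin.snoc_injective2 (α := fun _ ↦ ℝ) |>.left c

theorem snocAffine_mem_corners {c : ℝ} (hc : c = 0 ∨ c = 1) {y : Fin n → ℝ}
    (hy : y ∈ corners n) : snocAffine c y ∈ corners (n + 1) :=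
  Fin.forall_fin_succ'.2 ⟨fun i ↦ by simpa using hy i, by simpa using hc⟩

theorem cube_sep_last_eq_zero (n : ℕ) :
    {x ∈ cube (n + 1) | x (Fin.last n) = 0} = snocAffine 0 '' cube n := by
  ext x
  constructor
  · rintro ⟨hx, hx0⟩
    refine ⟨Fin.init x, fun i ↦ hx i.castSucc, ?_⟩
    rw [← Fin.snoc_init_self x, hx0, Fin.init_snoc]
    rfl
  · rintro ⟨y, hy, rfl⟩
    exact ⟨Fin.forall_fin_succ'.2 ⟨fun i ↦ by simpa using hy i, by simp⟩, snocAffine_last 0 y⟩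

theorem Lop_image_snocAffine_subset (c : ℝ) (Q : Set (Fin n → ℝ)) :
    Lop (n + 1) (snocAffine c '' Q) ⊆ snocAffine c '' Lop n Q := by
  have hbranch (i : Fin n) (b : ℝ) : snocAffine c '' Q ∩ {x | x i.castSucc = b} =
      snocAffine c '' (Q ∩ {y | y i = b}) := by
    simp [← image_inter_preimage]
  intro x hx
  obtain ⟨y, -, rfl⟩ : x ∈ snocAffine c '' convexHull ℝ Q := by
    rw [AffineMap.image_convexHull]
    exact Lop_subset_of_convex 0 (convex_convexHull ℝ _)
      (fun z hz _ ↦ subset_convexHull ℝ _ hz) hx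
  refine mem_image_of_mem _ (mem_iInter.2 fun i ↦ ?_)
  have hi := mem_iInter.1 hx i.castSucc
  rwa [hbranch, hbranch, ← image_union, ← AffineMap.image_convexHull,
    (snocAffine_injective c).mem_set_image] at hi

theorem Lk_image_snocAffine_subset (c : ℝ) (Q : Set (Fin n → ℝ)) :
    ∀ k, Lk (n + 1) k (snocAffine c '' Q) ⊆ snocAffine c '' Lk n k Q
  | 0 => subset_rfl
  | k + 1 => (Lop_mono (Lk_image_snocAffine_subset c Q k)).trans
      (Lop_image_snocAffine_subset c _)

/-- The Cayley polytope of `A` and `B`: the convex hull of a copy of `A` at height `0` and a copy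
of `B` at height `1`, where the last coordinate is the height. -/
def cayley (A B : Set (Fin n → ℝ)) : Set (Fin (n + 1) → ℝ) :=
  convexHull ℝ (snocAffine 0 '' A ∪ snocAffine 1 '' B)

theorem cayley_subset_last_le_one (A B : Set (Fin n → ℝ)) :
    cayley A B ⊆ {x | x (Fin.last n) ≤ 1} := by
  let π : (Fin (n + 1) → ℝ) →ₗ[ℝ] ℝ := LinearMap.proj (Fin.last n)
  refine convexHull_min ?_ (convex_halfSpace_le π.isLinear 1)
  rintro _ (⟨y, -, rfl⟩ | ⟨y, -, rfl⟩) <;> simp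

theorem cayley_inter_last_eq_zero (A B : Set (Fin n → ℝ)) :
    cayley A B ∩ {x | x (Fin.last n) = 0} = snocAffine 0 '' convexHull ℝ A := by
  let f : (Fin (n + 1) → ℝ) →ₗ[ℝ] ℝ := -LinearMap.proj (Fin.last n)
  have hface := convexHull_inter_hyperplane_eq (s := snocAffine 0 '' A ∪ snocAffine 1 '' B) f
    (c := 0) (by rintro _ (⟨y, -, rfl⟩ | ⟨y, -, rfl⟩) <;> simp [f])
  simpa [f, cayley, union_inter_distrib_right, ← image_inter_preimage,
    AffineMap.image_convexHull] using hface

theorem cayley_inter_last_eq_one (A B : Set (Fin n → ℝ)) :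
    cayley A B ∩ {x | x (Fin.last n) = 1} = snocAffine 1 '' convexHull ℝ B := by
  let f : (Fin (n + 1) → ℝ) →ₗ[ℝ] ℝ := LinearMap.proj (Fin.last n)
  have hface := convexHull_inter_hyperplane_eq (s := snocAffine 0 '' A ∪ snocAffine 1 '' B) f
    (c := 1) (by rintro _ (⟨y, -, rfl⟩ | ⟨y, -, rfl⟩) <;> simp [f])
  simpa [f, cayley, union_inter_distrib_right, ← image_inter_preimage,
    AffineMap.image_convexHull] using hface

theorem image_snocAffine_zero_subset_integerHull {A B : Set (Fin n → ℝ)} (hA : A ⊆ corners n) :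
    snocAffine 0 '' convexHull ℝ A ⊆ integerHull (n + 1) (cayley A B) := by
  rw [AffineMap.image_convexHull]
  refine convexHull_mono (subset_inter (subset_union_left.trans (subset_convexHull ℝ _)) ?_)
  rintro _ ⟨y, hy, rfl⟩
  exact snocAffine_mem_corners (.inl rfl) (hA hy)

end Cayley

section Triangles

variable {m : ℕ}

theorem sum_eq_sum_tidx {M : Type*} [AddCommMonoid M] (y : Fin (3 * m) → M) :
    ∑ v, y v = ∑ i, (y (tidx m i 0) + y (tidx m i 1) + y (tidx m i 2)) := by
  have hbij : Function.Bijective fun p : Fin m × Fin 3 ↦ tidx m p.1 p.2 := by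
    rw [Fintype.bijective_iff_injective_and_card]
    refine ⟨?_, by simp [mul_comm]⟩
    rintro ⟨i, a⟩ ⟨j, b⟩ h
    simp only [tidx, Fin.mk.injEq] at h
    simp only [Prod.mk.injEq, Fin.ext_iff]
    omega
  simp only [← hbij.sum_comp, Fintype.sum_prod_type, Fin.sum_univ_three]

theorem convex_Qm (m : ℕ) : Convex ℝ (Qm m) := by
  let π (v : Fin (3 * m)) : (Fin (3 * m) → ℝ) →ₗ[ℝ] ℝ := LinearMap.proj v
  have hedge (u v : Fin (3 * m)) : Convex ℝ {y : Fin (3 * m) → ℝ | y u + y v ≤ 1} :=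
    convex_halfSpace_le (π u + π v).isLinear 1
  have hsum : Convex ℝ {y : Fin (3 * m) → ℝ | (m : ℝ) + 1 / 2 ≤ ∑ v, y v} := by
    simpa [π] using convex_halfSpace_ge (∑ v, π v).isLinear ((m : ℝ) + 1 / 2)
  simp only [Qm, ofPred_and, ofPred_forall]
  exact (convex_iInter fun v ↦ (convex_halfSpace_ge (π v).isLinear 0).inter
      (convex_halfSpace_le (π v).isLinear 1)).inter
    ((convex_iInter fun i ↦ (hedge _ _).inter ((hedge _ _).inter (hedge _ _))).inter hsum)

theorem Lop_Qm_eq_empty (hm : 1 ≤ m) : Lop (3 * m) (Qm m) = ∅ := by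
  refine eq_empty_of_forall_notMem fun y hy ↦ ?_
  have hQ : y ∈ Qm m := Lop_subset_of_convex ⟨0, by omega⟩ (convex_Qm m) (fun _ hz _ ↦ hz) hy
  have htriangle (i : Fin m) : y (tidx m i 0) + y (tidx m i 1) + y (tidx m i 2) ≤ 1 :=
    Lop_subset_triangle_le_one (fun z hz ↦ hz.2.1 i) hy
  have hsum : ∑ v, y v ≤ m := calc
    ∑ v, y v = ∑ i, (y (tidx m i 0) + y (tidx m i 1) + y (tidx m i 2)) := sum_eq_sum_tidx y
    _ ≤ ∑ _i : Fin m, (1 : ℝ) := Finset.sum_le_sum fun i _ ↦ htriangle i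
    _ = m := by simp
  linarith [hQ.2.2]

end Triangles

theorem stmt13_general {n k : ℕ} {A Q : Set (Fin n → ℝ)} (hA : A ⊆ corners n)
    (hQ : Convex ℝ Q) (hQk : Lk n k Q = ∅) :
    Lk (n + 1) (k + 1) (cayley A Q) = integerHull (n + 1) (cayley A Q) ∧
    integerHull (n + 1) (cayley A Q) = snocAffine 0 '' convexHull ℝ A := by
  have hface : Lk (n + 1) k (cayley A Q ∩ {x | x (Fin.last n) = 1}) = ∅ := by
    rw [cayley_inter_last_eq_one, hQ.convexHull_eq, ← subset_empty_iff, ← image_empty, ← hQk]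
    exact Lk_image_snocAffine_subset 1 Q k
  have hlower := integerHull_subset_Lk_succ (P := cayley A Q) k
  have hupper : Lk (n + 1) (k + 1) (cayley A Q) ⊆ snocAffine 0 '' convexHull ℝ A :=
    (Lk_succ_subset_inter_eq_zero (convex_convexHull ℝ _) (cayley_subset_last_le_one A Q)
      hface).trans (cayley_inter_last_eq_zero A Q).subset
  have hintegral := image_snocAffine_zero_subset_integerHull (B := Q) hA
  exact ⟨(hupper.trans hintegral).antisymm hlower, (hlower.trans hupper).antisymm hintegral⟩

theorem stmt13 (m : ℕ) (hm : 1 ≤ m)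
    (P : Set (Fin (3 * m + 1) → ℝ))
    (hP : P = convexHull ℝ
      ((fun y : Fin (3 * m) → ℝ => Fin.snoc y (0 : ℝ)) '' corners (3 * m) ∪
       (fun y : Fin (3 * m) → ℝ => Fin.snoc y (1 : ℝ)) '' Qm m)) :
    Lk (3 * m + 1) 2 P = integerHull (3 * m + 1) P ∧
    integerHull (3 * m + 1) P =
      {x ∈ cube (3 * m + 1) | x (Fin.last (3 * m)) = 0} := by
  rw [hP, cube_sep_last_eq_zero, ← convexHull_corners]
  exact stmt13_general subset_rfl (convex_Qm m) (Lop_Qm_eq_empty hm)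
end
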